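/- A positive integer n has at least one nontrivial decomposition and all of its nontrivial decompositions are even if and only if n = 2^d · k for some d ≥ 0 and some odd prime k with k > 2^(d+1). -/

import Mathlib

/-- `IsDecomp n a m` means the `m` consecutive positive integers
`a+1, a+2, …, a+m` form a decomposition of `n`. -/
def IsDecomp (n a m : ℕ) : Prop :=
  1 ≤ m ∧ (Finset.range m).sum (fun i => a + i + 1) = n

/-!
Summing the progression, the lengths of the decompositions of `n` are the smaller factors in the
factorizations of `2 * n` into two factors of opposite parity. An odd `m` is therefore a length
exactly when `m ∣ n` and `m ^ 2 < 2 * n`, so the condition on `n` is that it has an odd divisor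
`m ≠ 1` and that each such `m` has `2 * n ≤ m ^ 2`. For `n = 2 ^ d * q` with `q` odd, a proper
factorization `q = x * y` would give `2 * x * y ≤ x ^ 2` and `2 * x * y ≤ y ^ 2`, which is absurd;
hence `q` is prime, and the inequality for `m = q` is `2 ^ (d + 1) ≤ q`.
-/

theorem two_mul_sum_range_add_add_one (a m : ℕ) :
    2 * ∑ i ∈ Finset.range m, (a + i + 1) = m * (2 * a + m + 1) := by
  induction m with
  | zero => simp
  | succ m ih => rw [Finset.sum_range_succ, mul_add, ih]; ring

theorem isDecomp_iff_mul_eq {n a m : ℕ} :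
    IsDecomp n a m ↔ 0 < m ∧ m * (2 * a + m + 1) = 2 * n := by
  rw [IsDecomp, ← two_mul_sum_range_add_add_one, Nat.mul_right_inj two_ne_zero, Nat.succ_le_iff]

theorem exists_isDecomp_iff {n m : ℕ} :
    (∃ a, IsDecomp n a m) ↔ ∃ l, 0 < m ∧ m < l ∧ Odd (m + l) ∧ m * l = 2 * n := by
  simp only [isDecomp_iff_mul_eq]
  constructor
  · rintro ⟨a, hm, hmul⟩
    exact ⟨2 * a + m + 1, hm, by omega, ⟨a + m, by ring⟩, hmul⟩
  · rintro ⟨l, hm, hlt, ⟨s, hs⟩, hmul⟩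
    have hl : 2 * (s - m) + m + 1 = l := by omega
    exact ⟨s - m, hm, by rw [hl, hmul]⟩

theorem exists_isDecomp_iff_of_odd {n m : ℕ} (hm : Odd m) :
    (∃ a, IsDecomp n a m) ↔ m ∣ n ∧ m ^ 2 < 2 * n := by
  rw [exists_isDecomp_iff]
  constructor
  · rintro ⟨l, hpos, hlt, -, hmul⟩
    refine ⟨hm.coprime_two_right.dvd_of_dvd_mul_left (Dvd.intro l hmul), ?_⟩
    rw [← hmul, sq]
    exact Nat.mul_lt_mul_of_pos_left hlt hpos
  · rintro ⟨⟨r, rfl⟩, hlt⟩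
    have hlt' : m * m < m * (2 * r) := by linarith
    exact ⟨2 * r, hm.pos, lt_of_mul_lt_mul_left' hlt', hm.add_even (even_two_mul r), by ring⟩

theorem exists_nontrivial_isDecomp_iff {n : ℕ} (hn : n ≠ 0) :
    (∃ a m, IsDecomp n a m ∧ m ≠ 1) ↔ ∃ q, Odd q ∧ q ∣ n ∧ q ≠ 1 := by
  rw [exists_comm]
  simp only [exists_and_right, exists_isDecomp_iff]
  constructor
  · rintro ⟨m, ⟨l, hpos, hlt, hodd, hmul⟩, hm1⟩
    rcases Nat.even_or_odd m with hm | hm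
    · have hl : Odd l := (Nat.odd_add'.1 hodd).2 hm
      exact ⟨l, hl, hl.coprime_two_right.dvd_of_dvd_mul_left (Dvd.intro_left m hmul), by omega⟩
    · exact ⟨m, hm, hm.coprime_two_right.dvd_of_dvd_mul_left (Dvd.intro l hmul), hm1⟩
  · rintro ⟨q, hq, ⟨r, rfl⟩, hq1⟩
    have hr : 0 < 2 * r := by have := right_ne_zero_of_mul hn; omega
    have hodd : Odd (q + 2 * r) := hq.add_even (even_two_mul r)
    rcases lt_or_gt_of_ne (show q ≠ 2 * r by grind) with hlt | hgt
    · exact ⟨q, ⟨2 * r, hq.pos, hlt, hodd, by ring⟩, hq1⟩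
    · exact ⟨2 * r, ⟨q, hr, hgt, by rwa [add_comm], by ring⟩, by omega⟩

theorem forall_nontrivial_isDecomp_even_iff {n : ℕ} :
    (∀ a m, IsDecomp n a m → m ≠ 1 → Even m) ↔
      ∀ m, Odd m → m ∣ n → m ≠ 1 → 2 * n ≤ m ^ 2 := by
  constructor
  · intro heven m hm hdvd hm1
    by_contra! hlt
    obtain ⟨a, ha⟩ := (exists_isDecomp_iff_of_odd hm).2 ⟨hdvd, hlt⟩
    exact Nat.not_even_iff_odd.2 hm (heven a m ha hm1)
  · intro hle a m ha hm1
    by_contra hm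
    rw [Nat.not_even_iff_odd] at hm
    obtain ⟨hdvd, hlt⟩ := (exists_isDecomp_iff_of_odd hm).1 ⟨a, ha⟩
    exact hlt.not_ge (hle m hm hdvd hm1)

theorem ne_one_and_forall_dvd_mul_le_sq_iff {c q : ℕ} (hc : 1 < c) (hq : q ≠ 0) :
    (q ≠ 1 ∧ ∀ m, m ∣ q → m ≠ 1 → c * q ≤ m ^ 2) ↔ q.Prime ∧ c ≤ q := by
  constructor
  · rintro ⟨hq1, hle⟩
    have mul_cofactor_le {x y : ℕ} (hxy : q = x * y) (hx1 : x ≠ 1) : c * y ≤ x := by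
      have hx : 0 < x := Nat.pos_of_ne_zero (left_ne_zero_of_mul (hxy ▸ hq))
      have hsq : x * (c * y) ≤ x * x := by
        calc x * (c * y) = c * q := by rw [hxy]; ring
          _ ≤ x ^ 2 := hle x ⟨y, hxy⟩ hx1
          _ = x * x := sq x
      exact Nat.le_of_mul_le_mul_left hsq hx
    have irreducible_q : Irreducible q := by
      refine ⟨by simpa only [Nat.isUnit_iff] using hq1, fun x y hxy ↦ ?_⟩
      by_contra! ⟨hx, hy⟩
      rw [Nat.isUnit_iff] at hx hy
      have two_mul_y_le : 2 * y ≤ x := (Nat.mul_le_mul_right y hc).trans (mul_cofactor_le hxy hx)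
      have two_mul_x_le : 2 * x ≤ y :=
        (Nat.mul_le_mul_right x hc).trans (mul_cofactor_le (hxy.trans (mul_comm x y)) hy)
      have hx0 : x ≠ 0 := left_ne_zero_of_mul (hxy ▸ hq)
      omega
    exact ⟨irreducible_q, by simpa only [mul_one] using mul_cofactor_le (mul_one q).symm hq1⟩
  · rintro ⟨hprime, hcq⟩
    refine ⟨hprime.ne_one, fun m hm hm1 ↦ ?_⟩
    obtain rfl := (Nat.dvd_prime hprime).1 hm |>.resolve_left hm1
    rw [sq]
    exact Nat.mul_le_mul_right m hcq

theorem odd_and_dvd_two_pow_mul_iff {d m q : ℕ} (hq : Odd q) :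
    Odd m ∧ m ∣ 2 ^ d * q ↔ m ∣ q :=
  ⟨fun ⟨hm, hdvd⟩ ↦ (hm.coprime_two_right.pow_right d).dvd_of_dvd_mul_left hdvd,
    fun hdvd ↦ ⟨hq.of_dvd_nat hdvd, hdvd.mul_left _⟩⟩

theorem only_even_nontrivial_decompositions_two_pow_mul_iff {d q : ℕ} (hq : Odd q) :
    ((∃ a m, IsDecomp (2 ^ d * q) a m ∧ m ≠ 1) ∧
        ∀ a m, IsDecomp (2 ^ d * q) a m → m ≠ 1 → Even m) ↔
      q.Prime ∧ 2 ^ (d + 1) < q := by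
  have hn : 2 ^ d * q ≠ 0 := mul_ne_zero (by positivity) hq.pos.ne'
  have exists_divisor_iff : (∃ m, m ∣ q ∧ m ≠ 1) ↔ q ≠ 1 :=
    ⟨fun ⟨_, hm, hm1⟩ hq1 ↦ hm1 (Nat.dvd_one.1 (hq1 ▸ hm)), fun hq1 ↦ ⟨q, dvd_rfl, hq1⟩⟩
  have two_pow_ne : 2 ^ (d + 1) ≠ q := by
    rintro rfl
    exact Nat.not_odd_iff_even.2 (even_two.pow_of_ne_zero d.succ_ne_zero) hq
  rw [exists_nontrivial_isDecomp_iff hn, forall_nontrivial_isDecomp_even_iff]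
  simp only [← and_assoc, ← and_imp, odd_and_dvd_two_pow_mul_iff hq]
  simp only [and_imp, exists_divisor_iff, ← mul_assoc, ← pow_succ']
  rw [ne_one_and_forall_dvd_mul_le_sq_iff (Nat.one_lt_two_pow d.succ_ne_zero) hq.pos.ne',
    two_pow_ne.le_iff_lt]

/-- A positive integer `n` has at least one nontrivial decomposition and all of
its nontrivial decompositions are even if and only if `n = 2^d * k` for some
`d ≥ 0` and some odd prime `k` with `k > 2^(d+1)`. -/
theorem only_even_nontrivial_decompositions_iff (n : ℕ) (hn : 0 < n) :
    ((∃ a m : ℕ, IsDecomp n a m ∧ m ≠ 1) ∧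
        (∀ a m : ℕ, IsDecomp n a m → m ≠ 1 → Even m)) ↔
      ∃ d k : ℕ, k.Prime ∧ Odd k ∧ 2 ^ (d + 1) < k ∧ n = 2 ^ d * k := by
  constructor
  · intro h
    obtain ⟨d, q, hq, rfl⟩ := Nat.exists_eq_two_pow_mul_odd hn.ne'
    obtain ⟨hprime, hlt⟩ := (only_even_nontrivial_decompositions_two_pow_mul_iff hq).1 h
    exact ⟨d, q, hprime, hq, hlt, rfl⟩
  · rintro ⟨d, k, hprime, hk, hlt, rfl⟩
    exact (only_even_nontrivial_decompositions_two_pow_mul_iff hk).2 ⟨hprime, hlt⟩
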